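/- Fix integers i and m with m ≥ 1, and let S = [2i−2(m−1), 2i+2(m−1)]_4. Then F_{j,m}|_S = 0 for every j ∈ [2i−(m−1), 2i+(m−1)]_2. -/

import Mathlib

/-!
The proof is a sign-reversing involution on order ideals that toggles a single element of
`Q_{m+1}`. Covers change the parity of `r + s`, so they only join `Q_m` with `Q_{m+1}`; whether an
element of `Q_{m+1}` can be toggled therefore depends only on the part of the ideal in `Q_m`.

Put `d = j - 2i`. An element of `Q_{m+1}` on the diagonal `s - r = d` has label
`3r + s + j = 2i + 2(r + s)`, which lies in `S`, so toggling it changes the sign of the specialized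
monomial. It remains to find, for every order ideal `I`, an element on that diagonal that can be
toggled. Encode `I ∩ Q_m` by the heights `H(r,s)` of its columns. Heights at diagonally adjacent
positions differ by exactly `2`. Along the diagonal, `H(r,s-1) - H(r-1,s)` runs from `+2` at its
first position to `-2` just after its last one, hence jumps from `+2` to `-2` somewhere. There the
four neighbouring heights are determined up to a common shift, and `(r, s, H(r+1,s) - 1)` can be
both added and removed. In other words, `I ∩ Q_m` is an `m × m` alternating sign matrix, the
diagonal is one of its rows, and a row with sum `1` contains an entry `1`.
-/

open MvPolynomial
open scoped Classical

noncomputable section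

/-- The set `Q_k`: triples `(r,s,t)` with `|r|+|s| ≤ k-2`, `r+s ≡ k (mod 2)`,
`t ≡ 2|s|-k+2 (mod 4)` and `2|s|-k+2 ≤ t ≤ k-2-2|r|`. -/
def pentagramQ (k : ℤ) : Set (ℤ × ℤ × ℤ) :=
  {p | |p.1| + |p.2.1| ≤ k - 2 ∧ (2 : ℤ) ∣ (p.1 + p.2.1 - k) ∧
    (4 : ℤ) ∣ (p.2.2 - (2 * |p.2.1| - k + 2)) ∧
    2 * |p.2.1| - k + 2 ≤ p.2.2 ∧ p.2.2 ≤ k - 2 - 2 * |p.1|}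

/-- The set `P_k = Q_k ∪ Q_{k+1}`. -/
def pentagramP (k : ℤ) : Set (ℤ × ℤ × ℤ) := pentagramQ k ∪ pentagramQ (k + 1)

/-- The covering relation: `(r',s',t')` covers `(r,s,t)` iff `t' = t + 1` and
`|r'-r| + |s'-s| = 1`. -/
def pentagramCovers (x y : ℤ × ℤ × ℤ) : Prop :=
  y.2.2 = x.2.2 + 1 ∧ |y.1 - x.1| + |y.2.1 - x.2.1| = 1

/-- The partial order on `P_k`: the reflexive-transitive closure of the covering
relation within `P_k`. -/
def pentagramLe (k : ℤ) : (ℤ × ℤ × ℤ) → (ℤ × ℤ × ℤ) → Prop :=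
  Relation.ReflTransGen
    (fun x y => x ∈ pentagramP k ∧ y ∈ pentagramP k ∧ pentagramCovers x y)

/-- An order ideal of `P_k`: a downward-closed subset of `P_k`. -/
def IsPentagramOrderIdeal (k : ℤ) (I : Set (ℤ × ℤ × ℤ)) : Prop :=
  I ⊆ pentagramP k ∧ ∀ x y, y ∈ I → pentagramLe k x y → x ∈ I

/-- `P_k` realized as a `Finset` (it is contained in the displayed finite box). -/
def pentagramPFinset (k : ℤ) : Finset (ℤ × ℤ × ℤ) :=
  ((Finset.Icc (-(k-1)) (k-1)) ×ˢ (Finset.Icc (-(k-1)) (k-1)) ×ˢ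
    (Finset.Icc (-(k-1)) (k-1))).filter (fun p => p ∈ pentagramP k)

/-- The F-polynomial `F_{j,k} = Σ_{order ideals I of P_k} Π_{(r,s,t) ∈ I} y_{3r+s+j}`,
as an element of `ℤ[y_i : i ∈ ℤ] = MvPolynomial ℤ ℤ`. -/
def pentagramF (j k : ℤ) : MvPolynomial ℤ ℤ :=
  ∑ I ∈ (pentagramPFinset k).powerset.filter
      (fun I : Finset (ℤ × ℤ × ℤ) => IsPentagramOrderIdeal k (↑I : Set (ℤ × ℤ × ℤ))),
    ∏ p ∈ I, X (3 * p.1 + p.2.1 + j)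

/-- The ring endomorphism of `ℤ[y_i : i ∈ ℤ]` sending `y_i ↦ -1` for `i ∈ S`
and fixing the other variables; `substNeg S F` is `F|_S`. -/
def substNeg (S : Set ℤ) : MvPolynomial ℤ ℤ →+* MvPolynomial ℤ ℤ :=
  (MvPolynomial.aeval
    (fun i : ℤ => if i ∈ S then (-1 : MvPolynomial ℤ ℤ) else X i)).toRingHom

/-- The arithmetic progression `[a,b]_d = {a, a+d, a+2d, …, b}` (as a subset of `ℤ`). -/
def AP (a b d : ℤ) : Set ℤ := {x | a ≤ x ∧ x ≤ b ∧ d ∣ (x - a)}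

open scoped symmDiff

lemma exists_not_and_add_one_of_le {p : ℤ → Prop} {a b : ℤ} (hab : a ≤ b) (ha : ¬ p a)
    (hb : p b) : ∃ c, a ≤ c ∧ c < b ∧ ¬ p c ∧ p (c + 1) := by
  by_contra! hstep
  have hnot : ∀ c, a ≤ c → c ≤ b → ¬ p c :=
    Int.leInduction (fun _ => ha) fun c hac hc hcb =>
      hstep c hac (by omega) (hc (by omega))
  exact hnot b hab le_rfl hb

section Toggling

variable {α : Type*} {r : α → α → Prop}

/-- `I` is an order ideal of the preorder on `P` generated by `r`, where `r x y` puts `x` below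
`y`. Only generating pairs are tested; `isOrderIdealIn_iff_reflTransGen` compares this with closure
under the generated preorder. -/
def IsOrderIdealIn (r : α → α → Prop) (P I : Set α) : Prop :=
  I ⊆ P ∧ ∀ x ∈ P, ∀ y ∈ I, r x y → x ∈ I

/-- `x` may be added to or removed from the order ideal `I` of `P` without destroying the ideal
property: everything just below `x` is in `I`, and nothing just above `x` is. -/
def IsToggleable (r : α → α → Prop) (P I : Set α) (x : α) : Prop :=
  x ∈ P ∧ (∀ y ∈ P, r y x → y ∈ I) ∧ ∀ z ∈ P, r x z → z ∉ I

lemma isOrderIdealIn_iff_reflTransGen {P I : Set α} :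
    IsOrderIdealIn r P I ↔ I ⊆ P ∧ ∀ x y, y ∈ I →
      Relation.ReflTransGen (fun x y => x ∈ P ∧ y ∈ P ∧ r x y) x y → x ∈ I := by
  refine and_congr_right fun hIP => ⟨fun hI x y hy hxy => ?_, fun hI x hx y hy hxy => ?_⟩
  · induction hxy using Relation.ReflTransGen.head_induction_on with
    | refl => exact hy
    | head hxz _ hz => exact hI _ hxz.1 _ hz hxz.2.2
  · exact hI x y hy (.single ⟨hx, hIP hy, hxy⟩)

lemma mem_symmDiff_singleton_of_ne {I : Set α} {x y : α} (h : y ≠ x) :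
    y ∈ I ∆ {x} ↔ y ∈ I := by
  simp [Set.mem_symmDiff, h]

lemma IsOrderIdealIn.symmDiff_singleton {P I : Set α} {x : α} (hI : IsOrderIdealIn r P I)
    (hx : IsToggleable r P I x) : IsOrderIdealIn r P (I ∆ {x}) := by
  obtain ⟨hxP, hbelow, habove⟩ := hx
  have hirrefl : ¬ r x x := fun h => habove x hxP h (hbelow x hxP h)
  refine ⟨fun y hy => ?_, fun y hyP z hz hyz => ?_⟩
  · obtain rfl | hyx := eq_or_ne y x
    · exact hxP
    · exact hI.1 ((mem_symmDiff_singleton_of_ne hyx).1 hy)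
  · obtain rfl | hzx := eq_or_ne z x
    · have hyz' : y ≠ z := by rintro rfl; exact hirrefl hyz
      exact (mem_symmDiff_singleton_of_ne hyz').2 (hbelow y hyP hyz)
    · have hzI : z ∈ I := (mem_symmDiff_singleton_of_ne hzx).1 hz
      have hyx : y ≠ x := by rintro rfl; exact habove z (hI.1 hzI) hyz hzI
      exact (mem_symmDiff_singleton_of_ne hyx).2 (hI.2 y hyP z hzI hyz)

lemma isToggleable_symmDiff_singleton_iff {P I : Set α} {x y : α} (hxy : ¬ r x y)
    (hyx : ¬ r y x) : IsToggleable r P (I ∆ {x}) y ↔ IsToggleable r P I y := by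
  have hmem {z : α} (hz : r z y ∨ r y z) : z ∈ I ∆ {x} ↔ z ∈ I :=
    mem_symmDiff_singleton_of_ne <| by rintro rfl; exact hz.elim hxy hyx
  refine and_congr_right fun _ => and_congr ?_ ?_
  · exact forall₃_congr fun z _ hz => hmem (.inl hz)
  · exact forall₃_congr fun z _ hz => not_congr (hmem (.inr hz))

variable {R : Type*} [CommRing R]

lemma prod_add_prod_symmDiff_singleton {f : α → R} {x : α} (hx : f x = -1) (I : Finset α) :
    ∏ p ∈ I, f p + ∏ p ∈ I ∆ {x}, f p = 0 := by
  by_cases h : x ∈ I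
  · have hI : I ∆ {x} = I.erase x := by ext y; grind [Finset.mem_symmDiff]
    rw [hI, ← Finset.mul_prod_erase I f h, hx]
    ring
  · have hI : I ∆ {x} = insert x I := by ext y; grind [Finset.mem_symmDiff]
    rw [hI, Finset.prod_insert h, hx]
    ring

theorem sum_prod_isOrderIdealIn_eq_zero {P : Finset α} {D : Set α} {f : α → R}
    (hD : ∀ x ∈ D, ∀ y ∈ D, ¬ r x y) (hf : ∀ x ∈ D, f x = -1)
    (hfree : ∀ I : Set α, IsOrderIdealIn r P I → ∃ x ∈ D, IsToggleable r P I x) :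
    ∑ I ∈ P.powerset.filter (fun I : Finset α => IsOrderIdealIn r P (I : Set α)),
      ∏ p ∈ I, f p = 0 := by
  have hα : Nonempty α := (hfree ∅ (by simp [IsOrderIdealIn])).nonempty
  -- The toggled element is chosen from the set of candidates alone; toggling does not change that
  -- set, so the second toggle undoes the first.
  let c (I : Finset α) : α := Classical.epsilon fun x => x ∈ D ∧ IsToggleable r P I x
  have hc {I : Finset α} (hI : IsOrderIdealIn r P (I : Set α)) :
      c I ∈ D ∧ IsToggleable r P I (c I) := Classical.epsilon_spec (hfree I hI)
  have hc_toggle {I : Finset α} (hI : IsOrderIdealIn r P (I : Set α)) :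
      c (I ∆ {c I}) = c I := by
    refine congrArg Classical.epsilon (funext fun x => propext (and_congr_right fun hx => ?_))
    rw [Finset.coe_symmDiff, Finset.coe_singleton]
    exact isToggleable_symmDiff_singleton_iff (hD _ (hc hI).1 x hx) (hD x hx _ (hc hI).1)
  refine Finset.sum_involution (fun I _ => I ∆ {c I}) (fun I hI => ?_) (fun I _ _ => ?_)
    (fun I hI => ?_) (fun I hI => ?_)
  · exact prod_add_prod_symmDiff_singleton (hf _ (hc (Finset.mem_filter.1 hI).2).1) I
  · simp
  · have hideal := (Finset.mem_filter.1 hI).2.symmDiff_singleton (hc (Finset.mem_filter.1 hI).2).2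
    rw [← Finset.coe_singleton, ← Finset.coe_symmDiff] at hideal
    exact Finset.mem_filter.2 ⟨Finset.mem_powerset.2 (Finset.coe_subset.1 hideal.1), hideal⟩
  · simp only [hc_toggle (Finset.mem_filter.1 hI).2, symmDiff_symmDiff_cancel_right]

end Toggling

section PentagramPoset

variable {k r s t r' s' t' : ℤ}

lemma mem_pentagramQ : (r, s, t) ∈ pentagramQ k ↔
    (2 : ℤ) ∣ r + s - k ∧ (4 : ℤ) ∣ t - (2 * |s| - k + 2) ∧
      2 * |s| - k + 2 ≤ t ∧ t ≤ k - 2 - 2 * |r| := by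
  change _ ∧ _ ↔ _
  exact and_iff_right_of_imp fun h => by omega

lemma mem_pentagramQ_of_mem_pentagramP (h : (r, s, t) ∈ pentagramP k)
    (hpar : (2 : ℤ) ∣ r + s - k) : (r, s, t) ∈ pentagramQ k := by
  refine h.resolve_right fun hQ => ?_
  rw [mem_pentagramQ] at hQ
  omega

lemma mem_pentagramPFinset {x : ℤ × ℤ × ℤ} : x ∈ pentagramPFinset k ↔ x ∈ pentagramP k := by
  obtain ⟨r, s, t⟩ := x
  simp only [pentagramPFinset, Finset.mem_filter, Finset.mem_product, Finset.mem_Icc,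
    and_iff_right_iff_imp]
  rintro (h | h) <;>
  · rw [mem_pentagramQ] at h
    simp only [abs_eq_max_neg] at h
    omega

lemma coe_pentagramPFinset : (pentagramPFinset k : Set (ℤ × ℤ × ℤ)) = pentagramP k :=
  Set.ext fun _ => mem_pentagramPFinset

lemma isPentagramOrderIdeal_iff {I : Set (ℤ × ℤ × ℤ)} :
    IsPentagramOrderIdeal k I ↔ IsOrderIdealIn pentagramCovers (pentagramP k) I :=
  isOrderIdealIn_iff_reflTransGen.symm

lemma pentagramCovers_iff : pentagramCovers (r, s, t) (r', s', t') ↔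
    t' = t + 1 ∧ (|r' - r| = 1 ∧ s' = s ∨ r' = r ∧ |s' - s| = 1) := by
  simp only [pentagramCovers, abs_eq_max_neg]
  omega

lemma not_pentagramCovers_of_mem_pentagramQ {x y : ℤ × ℤ × ℤ} (hx : x ∈ pentagramQ k)
    (hy : y ∈ pentagramQ k) : ¬ pentagramCovers x y := by
  obtain ⟨r, s, t⟩ := x
  obtain ⟨r', s', t'⟩ := y
  rw [mem_pentagramQ] at hx hy
  simp only [pentagramCovers_iff, abs_eq_max_neg]
  omega

lemma pentagramCovers.left_of_right_mem (h : pentagramCovers (r', s', t') (r, s, t))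
    (hQ : (r, s, t) ∈ pentagramQ (k + 1)) (hP : (r', s', t') ∈ pentagramP k) :
    (r', s', t') ∈ pentagramQ k ∧ r' = r ∧ |s' - s| = 1 ∧ t' = t - 1 := by
  have hQ' : (r', s', t') ∈ pentagramQ k :=
    hP.resolve_right fun hQ' => not_pentagramCovers_of_mem_pentagramQ hQ' hQ h
  refine ⟨hQ', ?_⟩
  rw [mem_pentagramQ] at hQ hQ'
  rw [pentagramCovers_iff] at h
  simp only [abs_eq_max_neg] at *
  omega

lemma pentagramCovers.right_of_left_mem (h : pentagramCovers (r, s, t) (r', s', t'))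
    (hQ : (r, s, t) ∈ pentagramQ (k + 1)) (hP : (r', s', t') ∈ pentagramP k) :
    (r', s', t') ∈ pentagramQ k ∧ |r' - r| = 1 ∧ s' = s ∧ t' = t + 1 := by
  have hQ' : (r', s', t') ∈ pentagramQ k :=
    hP.resolve_right fun hQ' => not_pentagramCovers_of_mem_pentagramQ hQ hQ' h
  refine ⟨hQ', ?_⟩
  rw [mem_pentagramQ] at hQ hQ'
  rw [pentagramCovers_iff] at h
  simp only [abs_eq_max_neg] at *
  omega

variable {I : Set (ℤ × ℤ × ℤ)}

lemma IsOrderIdealIn.mem_of_diagonal_step (hI : IsOrderIdealIn pentagramCovers (pentagramP k) I)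
    (hr : |r' - r| = 1) (hs : |s' - s| = 1) (h : (r, s, t) ∈ I)
    (hQ' : (r', s', t - 2) ∈ pentagramQ k) : (r', s', t - 2) ∈ I := by
  have hmid : (r', s, t - 1) ∈ pentagramQ (k + 1) := by
    have hQ : (r, s, t) ∈ pentagramQ k := by
      refine mem_pentagramQ_of_mem_pentagramP (hI.1 h) ?_
      rw [mem_pentagramQ] at hQ'
      simp only [abs_eq_max_neg] at *
      omega
    rw [mem_pentagramQ] at *
    simp only [abs_eq_max_neg] at *
    omega
  have hmidI : (r', s, t - 1) ∈ I :=
    hI.2 _ (.inr hmid) _ h (pentagramCovers_iff.2 ⟨by ring, .inl ⟨by rwa [abs_sub_comm], rfl⟩⟩)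
  exact hI.2 _ (.inl hQ') _ hmidI
    (pentagramCovers_iff.2 ⟨by ring, .inr ⟨rfl, by rwa [abs_sub_comm]⟩⟩)

lemma IsOrderIdealIn.mem_sub_four (hI : IsOrderIdealIn pentagramCovers (pentagramP k) I)
    (h : (r, s, t) ∈ I) (hQ' : (r, s, t - 4) ∈ pentagramQ k) : (r, s, t - 4) ∈ I := by
  have hmid : (r + 1, s + 1, t - 2) ∈ pentagramQ k := by
    have hQ : (r, s, t) ∈ pentagramQ k :=
      mem_pentagramQ_of_mem_pentagramP (hI.1 h) (mem_pentagramQ.1 hQ').1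
    rw [mem_pentagramQ] at *
    simp only [abs_eq_max_neg] at *
    omega
  have hmidI := hI.mem_of_diagonal_step (by simp) (by simp) h hmid
  rw [show t - 4 = t - 2 - 2 by ring] at hQ' ⊢
  exact hI.mem_of_diagonal_step (by simp) (by simp) hmidI hQ'

end PentagramPoset

section Height

/-- The `t ≥ 2|s|-m+2` in the residue class of the column of `Q_m` over `(r,s)` for which
`(r,s,t)` is missing from `I`. -/
def columnGaps (m : ℤ) (I : Set (ℤ × ℤ × ℤ)) (r s : ℤ) : Set ℤ :=
  {t | 2 * |s| - m + 2 ≤ t ∧ (4 : ℤ) ∣ t - (2 * |s| - m + 2) ∧ (r, s, t) ∉ I}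

/-- The height of the column of `I ∩ Q_m` over `(r,s)`. Meant for `r+s ≡ m (mod 2)` and
`|r|+|s| ≤ m`: the positions with `|r|+|s| = m` carry empty columns, but their heights serve as
boundary values. -/
def columnHeight (m : ℤ) (I : Set (ℤ × ℤ × ℤ)) (r s : ℤ) : ℤ :=
  sInf (columnGaps m I r s)

variable {m r s t r' s' : ℤ} {I : Set (ℤ × ℤ × ℤ)}

lemma bddBelow_columnGaps : BddBelow (columnGaps m I r s) :=
  ⟨2 * |s| - m + 2, fun _ ht => ht.1⟩

lemma top_mem_columnGaps (hI : I ⊆ pentagramP m) (hrs : |r| + |s| ≤ m)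
    (hpar : (2 : ℤ) ∣ r + s - m) : m + 2 - 2 * |r| ∈ columnGaps m I r s := by
  refine ⟨by omega, ?_, fun h => ?_⟩
  · simp only [abs_eq_max_neg]
    omega
  · have hQ := mem_pentagramQ.1 (mem_pentagramQ_of_mem_pentagramP (hI h) hpar)
    omega

lemma columnHeight_mem_columnGaps (hI : I ⊆ pentagramP m) (hrs : |r| + |s| ≤ m)
    (hpar : (2 : ℤ) ∣ r + s - m) : columnHeight m I r s ∈ columnGaps m I r s :=
  Int.csInf_mem ⟨_, top_mem_columnGaps hI hrs hpar⟩ bddBelow_columnGaps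

lemma columnHeight_le (hI : I ⊆ pentagramP m) (hrs : |r| + |s| ≤ m)
    (hpar : (2 : ℤ) ∣ r + s - m) : columnHeight m I r s ≤ m + 2 - 2 * |r| :=
  csInf_le bddBelow_columnGaps (top_mem_columnGaps hI hrs hpar)

lemma columnHeight_eq_of_abs_add_abs_eq (hI : I ⊆ pentagramP m) (hrs : |r| + |s| = m)
    (hpar : (2 : ℤ) ∣ r + s - m) : columnHeight m I r s = 2 * |s| - m + 2 := by
  have hle := columnHeight_le hI hrs.le hpar
  have hge := (columnHeight_mem_columnGaps hI hrs.le hpar).1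
  omega

lemma mem_iff_lt_columnHeight (hI : IsOrderIdealIn pentagramCovers (pentagramP m) I)
    (hQ : (r, s, t) ∈ pentagramQ m) : (r, s, t) ∈ I ↔ t < columnHeight m I r s := by
  have hQ' := mem_pentagramQ.1 hQ
  obtain ⟨hge, hdvd, hnot⟩ := columnHeight_mem_columnGaps hI.1 (r := r) (s := s) (by omega) hQ'.1
  refine ⟨fun htI => ?_, fun hlt => ?_⟩
  · by_contra! hle
    obtain ⟨n, hn⟩ : ∃ n : ℕ, columnHeight m I r s = t - 4 * n :=
      ⟨((t - columnHeight m I r s) / 4).toNat, by omega⟩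
    have hdescend : ∀ d : ℕ, d ≤ n → (r, s, t - 4 * (d : ℤ)) ∈ I := by
      intro d
      induction d with
      | zero => simpa using htI
      | succ d ih =>
        intro hd
        rw [show t - 4 * ((d + 1 : ℕ) : ℤ) = t - 4 * (d : ℤ) - 4 by push_cast; ring]
        exact hI.mem_sub_four (ih (by omega)) (mem_pentagramQ.2 (by omega))
    exact hnot (hn ▸ hdescend n le_rfl)
  · by_contra htI
    exact notMem_of_lt_csInf hlt bddBelow_columnGaps ⟨by omega, by omega, htI⟩

lemma two_dvd_add_sub_of_abs_sub_eq_one (hr : |r' - r| = 1) (hs : |s' - s| = 1)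
    (hpar : (2 : ℤ) ∣ r + s - m) : (2 : ℤ) ∣ r' + s' - m := by
  simp only [abs_eq_max_neg] at *
  omega

lemma four_dvd_columnHeight_sub_sub_two (hI : I ⊆ pentagramP m) (hr : |r' - r| = 1)
    (hs : |s' - s| = 1) (hrs : |r| + |s| ≤ m) (hrs' : |r'| + |s'| ≤ m)
    (hpar : (2 : ℤ) ∣ r + s - m) :
    (4 : ℤ) ∣ columnHeight m I r s - columnHeight m I r' s' - 2 := by
  obtain ⟨-, hdvd, -⟩ := columnHeight_mem_columnGaps hI hrs hpar
  obtain ⟨-, hdvd', -⟩ :=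
    columnHeight_mem_columnGaps hI hrs' (two_dvd_add_sub_of_abs_sub_eq_one hr hs hpar)
  have habs : |s'| = |s| + 1 ∨ |s'| = |s| - 1 := by
    simp only [abs_eq_max_neg] at *
    omega
  omega

lemma columnHeight_le_add_two (hI : IsOrderIdealIn pentagramCovers (pentagramP m) I)
    (hr : |r' - r| = 1) (hs : |s' - s| = 1) (hrs : |r| + |s| ≤ m) (hrs' : |r'| + |s'| ≤ m)
    (hpar : (2 : ℤ) ∣ r + s - m) : columnHeight m I r s ≤ columnHeight m I r' s' + 2 := by
  have hpar' := two_dvd_add_sub_of_abs_sub_eq_one hr hs hpar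
  have hmod := four_dvd_columnHeight_sub_sub_two hI.1 hr hs hrs hrs' hpar
  have hle := columnHeight_le hI.1 hrs hpar
  obtain ⟨hge', hdvd', -⟩ := columnHeight_mem_columnGaps hI.1 hrs' hpar'
  by_contra! hlt
  have hQ : (r, s, columnHeight m I r s - 4) ∈ pentagramQ m := by
    rw [mem_pentagramQ]
    simp only [abs_eq_max_neg] at *
    omega
  have hQ' : (r', s', columnHeight m I r s - 4 - 2) ∈ pentagramQ m := by
    rw [mem_pentagramQ]
    simp only [abs_eq_max_neg] at *
    omega
  have hmem : (r', s', columnHeight m I r s - 4 - 2) ∈ I :=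
    hI.mem_of_diagonal_step hr hs ((mem_iff_lt_columnHeight hI hQ).2 (by omega)) hQ'
  have hlt' := (mem_iff_lt_columnHeight hI hQ').1 hmem
  omega

lemma columnHeight_eq_add_two_or_sub_two
    (hI : IsOrderIdealIn pentagramCovers (pentagramP m) I) (hr : |r' - r| = 1) (hs : |s' - s| = 1)
    (hrs : |r| + |s| ≤ m) (hrs' : |r'| + |s'| ≤ m) (hpar : (2 : ℤ) ∣ r + s - m) :
    columnHeight m I r' s' = columnHeight m I r s + 2 ∨
      columnHeight m I r' s' = columnHeight m I r s - 2 := by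
  have hmod := four_dvd_columnHeight_sub_sub_two hI.1 hr hs hrs hrs' hpar
  have hle := columnHeight_le_add_two hI hr hs hrs hrs' hpar
  have hle' := columnHeight_le_add_two hI (by rwa [abs_sub_comm]) (by rwa [abs_sub_comm])
    hrs' hrs (two_dvd_add_sub_of_abs_sub_eq_one hr hs hpar)
  omega

end Height

section Diagonal

/-- The elements of `Q_{m+1}` over the diagonal `s - r = d`. -/
def pentagramDiagonal (m d : ℤ) : Set (ℤ × ℤ × ℤ) :=
  {x ∈ pentagramQ (m + 1) | x.2.1 - x.1 = d}

variable {m d r s : ℤ} {I : Set (ℤ × ℤ × ℤ)}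

lemma exists_columnHeight_eq_of_lt
    (hI : IsOrderIdealIn pentagramCovers (pentagramP m) I) (hrs : |r| + |s| ≤ m - 1)
    (hpar : (2 : ℤ) ∣ r + s - (m + 1))
    (hlt : columnHeight m I (r - 1) s < columnHeight m I r (s - 1))
    (hlt' : columnHeight m I (r + 1) s < columnHeight m I r (s + 1)) :
    ∃ a, (∀ r₁, |r₁ - r| = 1 → columnHeight m I r₁ s = a) ∧
      ∀ s₁, |s₁ - s| = 1 → columnHeight m I r s₁ = a + 2 := by
  have hadj {r₁ s₁ : ℤ} (hr₁ : |r₁ - r| = 1) (hs₁ : |s₁ - s| = 1) :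
      columnHeight m I r s₁ = columnHeight m I r₁ s + 2 ∨
        columnHeight m I r s₁ = columnHeight m I r₁ s - 2 := by
    refine columnHeight_eq_add_two_or_sub_two hI (by rwa [abs_sub_comm]) hs₁ ?_ ?_ ?_ <;>
      simp only [abs_eq_max_neg] at * <;> omega
  obtain ⟨a, ha⟩ : ∃ a, columnHeight m I (r + 1) s = a := ⟨_, rfl⟩
  have h₁ := hadj (r₁ := r + 1) (s₁ := s - 1) (by simp) (by simp)
  have h₂ := hadj (r₁ := r - 1) (s₁ := s + 1) (by simp) (by simp)
  have h₃ := hadj (r₁ := r - 1) (s₁ := s - 1) (by simp) (by simp)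
  refine ⟨a, fun r₁ hr₁ => ?_, fun s₁ hs₁ => ?_⟩
  · obtain rfl | rfl : r₁ = r + 1 ∨ r₁ = r - 1 := by
      simp only [abs_eq_max_neg] at hr₁
      omega
    all_goals omega
  · obtain rfl | rfl : s₁ = s + 1 ∨ s₁ = s - 1 := by
      simp only [abs_eq_max_neg] at hs₁
      omega
    all_goals omega

/-- In the language of alternating sign matrices, the two inequalities say that the entry at
`(r,s)` is `1`. -/
lemma exists_isToggleable_of_columnHeight_lt
    (hI : IsOrderIdealIn pentagramCovers (pentagramP m) I) (hrs : |r| + |s| ≤ m - 1)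
    (hpar : (2 : ℤ) ∣ r + s - (m + 1))
    (hlt : columnHeight m I (r - 1) s < columnHeight m I r (s - 1))
    (hlt' : columnHeight m I (r + 1) s < columnHeight m I r (s + 1)) :
    ∃ t, (r, s, t) ∈ pentagramQ (m + 1) ∧
      IsToggleable pentagramCovers (pentagramP m) I (r, s, t) := by
  obtain ⟨a, hr, hs⟩ := exists_columnHeight_eq_of_lt hI hrs hpar hlt hlt'
  have hQ : (r, s, a - 1) ∈ pentagramQ (m + 1) := by
    have habs : |s + 1| ≤ |s| + 1 ∧ |r + 1| ≤ |r| + 1 :=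
      ⟨abs_add_le s 1, abs_add_le r 1⟩
    obtain ⟨hge, hdvd, -⟩ :=
      columnHeight_mem_columnGaps hI.1 (r := r + 1) (s := s) (by omega) (by omega)
    have hle := columnHeight_le hI.1 (r := r) (s := s + 1) (by omega) (by omega)
    rw [hr _ (by simp)] at hge hdvd
    rw [hs _ (by simp)] at hle
    rw [mem_pentagramQ]
    omega
  refine ⟨a - 1, hQ, .inr hQ, ?_, ?_⟩
  · rintro ⟨r₁, s₁, t₁⟩ hP hcov
    obtain ⟨hQ₁, rfl, hs₁, rfl⟩ := hcov.left_of_right_mem hQ hP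
    rw [mem_iff_lt_columnHeight hI hQ₁, hs _ hs₁]
    omega
  · rintro ⟨r₁, s₁, t₁⟩ hP hcov
    obtain ⟨hQ₁, hr₁, rfl, rfl⟩ := hcov.right_of_left_mem hQ hP
    rw [mem_iff_lt_columnHeight hI hQ₁, hr _ hr₁]
    omega

lemma exists_columnHeight_lt_and_lt (hd : |d| ≤ m - 1) (hpar : (2 : ℤ) ∣ d - (m - 1))
    (hI : IsOrderIdealIn pentagramCovers (pentagramP m) I) :
    ∃ r, |r| + |r + d| ≤ m - 1 ∧
      columnHeight m I (r - 1) (r + d) < columnHeight m I r (r + d - 1) ∧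
      columnHeight m I (r + 1) (r + d) < columnHeight m I r (r + d + 1) := by
  obtain ⟨a, ha⟩ : ∃ a, d = -2 * a - (m - 1) := ⟨-(d + (m - 1)) / 2, by omega⟩
  rw [abs_le] at hd
  have hbdry {r s : ℤ} (hrs : |r| + |s| = m) : columnHeight m I r s = 2 * |s| - m + 2 := by
    refine columnHeight_eq_of_abs_add_abs_eq hI.1 hrs ?_
    simp only [abs_eq_max_neg] at hrs
    omega
  let p (r : ℤ) : Prop := columnHeight m I r (r + d - 1) < columnHeight m I (r - 1) (r + d)
  have hstart : ¬ p a := by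
    simp only [p]
    rw [hbdry, hbdry] <;> simp only [abs_eq_max_neg] <;> omega
  have hend : p (a + m) := by
    simp only [p]
    rw [hbdry, hbdry] <;> simp only [abs_eq_max_neg] <;> omega
  obtain ⟨r, har, hrm, hr, hr'⟩ := exists_not_and_add_one_of_le (by omega) hstart hend
  have hrs : |r| + |r + d| ≤ m - 1 := by
    simp only [abs_eq_max_neg]
    omega
  refine ⟨r, hrs, ?_, ?_⟩
  · have hadj := columnHeight_eq_add_two_or_sub_two hI (r := r) (s := r + d - 1)
      (r' := r - 1) (s' := r + d) (by simp) (by simp)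
      (by simp only [abs_eq_max_neg] at *; omega) (by simp only [abs_eq_max_neg] at *; omega)
      (by omega)
    simp only [p] at hr
    omega
  · simpa only [p, add_sub_cancel_right, add_right_comm r 1 d] using hr'

lemma exists_isToggleable_mem_pentagramDiagonal (hd : |d| ≤ m - 1) (hpar : (2 : ℤ) ∣ d - (m - 1))
    (hI : IsOrderIdealIn pentagramCovers (pentagramP m) I) :
    ∃ x ∈ pentagramDiagonal m d, IsToggleable pentagramCovers (pentagramP m) I x := by
  obtain ⟨r, hrs, hlt, hlt'⟩ := exists_columnHeight_lt_and_lt hd hpar hI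
  obtain ⟨t, hQ, htoggle⟩ := exists_isToggleable_of_columnHeight_lt hI hrs (by omega) hlt hlt'
  exact ⟨(r, r + d, t), ⟨hQ, add_sub_cancel_left r d⟩, htoggle⟩

end Diagonal

section Specialization

variable {i j m d : ℤ}

lemma map_pentagramF_eq_zero {R : Type*} [CommRing R] (φ : MvPolynomial ℤ ℤ →+* R)
    (hd : |d| ≤ m - 1) (hpar : (2 : ℤ) ∣ d - (m - 1))
    (hφ : ∀ x ∈ pentagramDiagonal m d, φ (X (3 * x.1 + x.2.1 + j)) = -1) :
    φ (pentagramF j m) = 0 := by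
  simp only [pentagramF, isPentagramOrderIdeal_iff, ← coe_pentagramPFinset, map_sum, map_prod]
  refine sum_prod_isOrderIdealIn_eq_zero (fun x hx y hy =>
    not_pentagramCovers_of_mem_pentagramQ hx.1 hy.1) hφ fun I hI => ?_
  rw [coe_pentagramPFinset] at hI ⊢
  exact exists_isToggleable_mem_pentagramDiagonal hd hpar hI

lemma substNeg_X_of_mem {S : Set ℤ} (hi : i ∈ S) : substNeg S (X i) = -1 := by
  simp [substNeg, hi]

lemma label_mem_AP_of_mem_pentagramDiagonal {x : ℤ × ℤ × ℤ}
    (hx : x ∈ pentagramDiagonal m (j - 2 * i)) :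
    3 * x.1 + x.2.1 + j ∈ AP (2 * i - 2 * (m - 1)) (2 * i + 2 * (m - 1)) 4 := by
  obtain ⟨r, s, t⟩ := x
  obtain ⟨hQ, hsr : s - r = j - 2 * i⟩ := hx
  have hlabel : 3 * r + s + j = 2 * i + 2 * (r + s) := by omega
  have hQ_abs : |r| + |s| ≤ m + 1 - 2 := hQ.1
  have hrs : |r + s| ≤ m - 1 := (abs_add_le r s).trans (by omega)
  have hpar : (2 : ℤ) ∣ r + s - (m + 1) := hQ.2.1
  rw [abs_le] at hrs
  exact hlabel ▸ ⟨by omega, by omega, by omega⟩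

end Specialization

theorem stmt9 (i m : ℤ) (hm : 1 ≤ m) :
    ∀ j ∈ AP (2 * i - (m - 1)) (2 * i + (m - 1)) 2,
      substNeg (AP (2 * i - 2 * (m - 1)) (2 * i + 2 * (m - 1)) 4) (pentagramF j m) = 0 := by
  rintro j ⟨hj_ge, hj_le, hj_dvd⟩
  have hd : |j - 2 * i| ≤ m - 1 := abs_le.2 ⟨by omega, by omega⟩
  have hpar : (2 : ℤ) ∣ j - 2 * i - (m - 1) := by omega
  exact map_pentagramF_eq_zero _ hd hpar fun x hx =>
    substNeg_X_of_mem (label_mem_AP_of_mem_pentagramDiagonal hx)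

end
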